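/- arXiv:2205.12679 — 4 statements merged into one kernel-verified Lean document; each statement's English description precedes it below -/
import Mathlib

section
/- Under uniform label noise with rate η, the noisy robust risk is an affine function of the clean robust risk: for every parameter θ, L_η(θ) = ((K − 1 − K·η)/(K − 1)) · L_clean(θ) + η·C/(K − 1). -/
open MeasureTheory Finset

section IntegrableEval

variable {Ω ι E : Type*} [MeasurableSpace Ω] [NormedAddCommGroup E] {μ : Measure Ω}
  [Finite ι] [MeasurableSpace ι] [MeasurableSingletonClass ι]

theorem integrable_eval_iff_forall_integrableOn_fiber {g : Ω → ι → E} {y : Ω → ι}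
    (hy : Measurable y) :
    Integrable (fun ω => g ω (y ω)) μ ↔ ∀ j, IntegrableOn (fun ω => g ω j) (y ⁻¹' {j}) μ := by
  have fibers_cover : ⋃ j, y ⁻¹' {j} = Set.univ := by
    rw [← Set.preimage_iUnion, Set.iUnion_of_singleton, Set.preimage_univ]
  rw [← integrableOn_univ, ← fibers_cover, integrableOn_finite_iUnion]
  refine forall_congr' fun j => integrableOn_congr_fun ?_ (hy (measurableSet_singleton j))
  rintro ω rfl
  rfl

theorem integrable_eval {g : Ω → ι → E} {y : Ω → ι} (hy : Measurable y)
    (hg : ∀ j, Integrable (fun ω => g ω j) μ) : Integrable (fun ω => g ω (y ω)) μ :=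
  (integrable_eval_iff_forall_integrableOn_fiber hy).2 fun j => (hg j).integrableOn

end IntegrableEval

section UniformNoise

variable {ι : Type*} [Fintype ι] [DecidableEq ι]

/-- The expected loss at a point with true label `y` when the observed label is `y` with
probability `1 - η` and otherwise uniform among the other labels. The vector `ℓ` lists the losses
of one fixed prediction against each label. For a single label the division is by zero, and the
second summand vanishes. -/
noncomputable def uniformNoiseLoss (η : ℝ) (ℓ : ι → ℝ) (y : ι) : ℝ :=
  (1 - η) * ℓ y + η / ((Fintype.card ι : ℝ) - 1) * ∑ j with j ≠ y, ℓ j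

theorem uniformNoiseLoss_eq_affine [Nontrivial ι] (η : ℝ) (ℓ : ι → ℝ) (y : ι) :
    uniformNoiseLoss η ℓ y =
      ((Fintype.card ι : ℝ) - 1 - Fintype.card ι * η) / ((Fintype.card ι : ℝ) - 1) * ℓ y
        + η * (∑ j, ℓ j) / ((Fintype.card ι : ℝ) - 1) := by
  have card_sub_one_ne_zero : (Fintype.card ι : ℝ) - 1 ≠ 0 :=
    sub_ne_zero.2 (Nat.cast_ne_one.2 Fintype.one_lt_card.ne')
  have sum_other_labels : ∑ j with j ≠ y, ℓ j = ∑ j, ℓ j - ℓ y := by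
    rw [filter_ne', sum_erase_eq_sub (mem_univ y)]
  rw [uniformNoiseLoss, sum_other_labels]
  field_simp
  ring

theorem uniform_noise_risk_affine_general [Nontrivial ι] {Ω : Type*} [MeasurableSpace Ω]
    {μ : Measure Ω} [IsProbabilityMeasure μ] {loss : Ω → ι → ℝ} {y : Ω → ι} {C : ℝ}
    (hsym : ∀ᵐ ω ∂μ, ∑ j, loss ω j = C) (hint : Integrable (fun ω => loss ω (y ω)) μ) (η : ℝ) :
    ∫ ω, uniformNoiseLoss η (loss ω) (y ω) ∂μ =
      ((Fintype.card ι : ℝ) - 1 - Fintype.card ι * η) / ((Fintype.card ι : ℝ) - 1)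
          * ∫ ω, loss ω (y ω) ∂μ
        + η * C / ((Fintype.card ι : ℝ) - 1) := by
  set a := ((Fintype.card ι : ℝ) - 1 - Fintype.card ι * η) / ((Fintype.card ι : ℝ) - 1)
  set b := η * C / ((Fintype.card ι : ℝ) - 1)
  calc ∫ ω, uniformNoiseLoss η (loss ω) (y ω) ∂μ
      = ∫ ω, (a * loss ω (y ω) + b) ∂μ := by
        refine integral_congr_ae ?_
        filter_upwards [hsym] with ω hω
        rw [uniformNoiseLoss_eq_affine, hω]
    _ = a * ∫ ω, loss ω (y ω) ∂μ + b := by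
        rw [integral_add (hint.const_mul a) (integrable_const b), integral_const_mul,
          integral_const, probReal_univ, one_smul]

end UniformNoise

/-- Under uniform label noise with rate `η`, the noisy robust risk is an affine function of
the clean robust risk. -/
theorem uniform_noise_risk_affine
    {X : Type*} [MeasurableSpace X] {Θ : Type*} {P : Type*}
    (K : ℕ) (hK : 2 ≤ K)
    (f : Θ → X → P) (ℓ : P → Fin K → ℝ) (C : ℝ)
    (hsym : ∀ p : P, ∑ j : Fin K, ℓ p j = C)
    (μ : Measure (X × Fin K)) [IsProbabilityMeasure μ]
    (hmeas : ∀ (θ : Θ) (j : Fin K), Measurable (fun z : X × Fin K => ℓ (f θ z.1) j))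
    (hint : ∀ (θ : Θ) (j : Fin K), Integrable (fun z : X × Fin K => ℓ (f θ z.1) j) μ)
    (η : ℝ) (hη0 : 0 ≤ η) (hη1 : η < 1)
    (Lclean Lnoisy : Θ → ℝ)
    (hLclean : ∀ θ : Θ, Lclean θ = ∫ z : X × Fin K, ℓ (f θ z.1) z.2 ∂μ)
    (hLnoisy : ∀ θ : Θ, Lnoisy θ =
      ∫ z : X × Fin K,
        ((1 - η) * ℓ (f θ z.1) z.2
          + (η / ((K : ℝ) - 1)) * ∑ j ∈ Finset.univ.filter (fun j => j ≠ z.2), ℓ (f θ z.1) j) ∂μ)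
    (θ : Θ) :
    Lnoisy θ = (((K : ℝ) - 1 - (K : ℝ) * η) / ((K : ℝ) - 1)) * Lclean θ
      + η * C / ((K : ℝ) - 1) := by
  have : Nontrivial (Fin K) := Fin.nontrivial_iff_two_le.2 hK
  rw [hLnoisy, hLclean]
  simpa only [uniformNoiseLoss, Fintype.card_fin] using
    uniform_noise_risk_affine_general (.of_forall fun z => hsym (f θ z.1))
      (integrable_eval measurable_snd (hint θ)) η
end

section
/- Under class-dependent label noise given by a noise matrix (η_{ij}), the noisy risk of a symmetric loss decomposes as: for every parameter θ, L_cd(θ) = C · ∫ (1 − η_y) dμ(x, y) − ∫ ∑_{j ≠ y} (1 − η_y − η_{y j}) · ℓ(f θ x, j) dμ(x, y), where η_i = ∑_{j ≠ i} η_{ij}. -/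
open MeasureTheory Finset

section Algebra

variable {ι R : Type*} [Fintype ι] [DecidableEq ι] [NonUnitalNonAssocRing R]

theorem mul_add_sum_ne_eq_mul_sum_sub_sum_ne (c : R) (w L : ι → R) (y : ι) :
    c * L y + ∑ j with j ≠ y, w j * L j =
      c * ∑ j, L j - ∑ j with j ≠ y, (c - w j) * L j := by
  have split_true_label : ∑ j, L j = L y + ∑ j with j ≠ y, L j := by
    rw [filter_ne', add_sum_erase _ _ (mem_univ y)]
  simp only [split_true_label, mul_add, mul_sum, sub_mul, sum_sub_distrib]
  abel

end Algebra

section Integrability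

variable {Ω ι : Type*} [MeasurableSpace Ω] {μ : Measure Ω} [Finite ι] [MeasurableSpace ι]
  [MeasurableSingletonClass ι] {y : Ω → ι}

theorem integrable_comp_mul_of_finite (hy : AEMeasurable y μ) (g : ι → ℝ) {F : Ω → ℝ}
    (hF : Integrable F μ) : Integrable (fun ω => g (y ω) * F ω) μ := by
  obtain ⟨B, hB⟩ := Finite.exists_le fun i => ‖g i‖
  have hg : AEStronglyMeasurable (fun ω => g (y ω)) μ :=
    ((measurable_of_finite g).comp_aemeasurable hy).aestronglyMeasurable
  exact hF.bdd_mul hg (ae_of_all μ fun ω => hB (y ω))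

theorem integrable_sum_comp_mul_of_finite {κ : Type*} [Finite κ] (hy : AEMeasurable y μ)
    (s : ι → Finset κ) (g : ι → κ → ℝ) {F : Ω → κ → ℝ}
    (hF : ∀ j, Integrable (fun ω => F ω j) μ) :
    Integrable (fun ω => ∑ j ∈ s (y ω), g (y ω) j * F ω j) μ := by
  classical
  have := Fintype.ofFinite κ
  -- Extending the coefficients by zero makes the index set independent of `ω`.
  have extend_by_zero (ω : Ω) : ∑ j ∈ s (y ω), g (y ω) j * F ω j =
      ∑ j, (if j ∈ s (y ω) then g (y ω) j else 0) * F ω j := by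
    simp only [ite_mul, zero_mul, sum_ite_mem, univ_inter]
  simp only [extend_by_zero]
  exact integrable_finsetSum _ fun j _ =>
    integrable_comp_mul_of_finite hy (fun i => if j ∈ s i then g i j else 0) (hF j)

end Integrability

theorem class_dependent_noise_risk_decomposition_general
    {Ω ι : Type*} [MeasurableSpace Ω] {μ : Measure Ω} [IsFiniteMeasure μ]
    [Fintype ι] [DecidableEq ι] [MeasurableSpace ι] [MeasurableSingletonClass ι]
    {y : Ω → ι} (hy : AEMeasurable y μ) {L : Ω → ι → ℝ} {C : ℝ}
    (hsym : ∀ᵐ ω ∂μ, ∑ j, L ω j = C) (hint : ∀ j, Integrable (fun ω => L ω j) μ)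
    (c : ι → ℝ) (w : ι → ι → ℝ) :
    ∫ ω, (c (y ω) * L ω (y ω) + ∑ j with j ≠ y ω, w (y ω) j * L ω j) ∂μ =
      C * ∫ ω, c (y ω) ∂μ - ∫ ω, ∑ j with j ≠ y ω, (c (y ω) - w (y ω) j) * L ω j ∂μ := by
  have clean_integrable : Integrable (fun ω => c (y ω)) μ :=
    Integrable.of_finite.comp_aemeasurable hy
  have residual_integrable :
      Integrable (fun ω => ∑ j with j ≠ y ω, (c (y ω) - w (y ω) j) * L ω j) μ :=
    integrable_sum_comp_mul_of_finite hy (fun i => {j | j ≠ i}) (fun i j => c i - w i j) hint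
  rw [← integral_const_mul, ← integral_sub (clean_integrable.const_mul C) residual_integrable]
  refine integral_congr_ae ?_
  filter_upwards [hsym] with ω sum_eq
  rw [mul_add_sum_ne_eq_mul_sum_sub_sum_ne, sum_eq, mul_comm C]

/-- Under class-dependent label noise given by a noise matrix `η i j`, the noisy risk of a
symmetric loss decomposes as
`L_cd(θ) = C·∫ (1 − η_y) dμ − ∫ ∑_{j ≠ y} (1 − η_y − η_{y j})·ℓ(f θ x, j) dμ`,
where `η_i = ∑_{j ≠ i} η i j`. -/
theorem class_dependent_noise_risk_decomposition
    {X : Type*} [MeasurableSpace X] {Θ : Type*} {P : Type*}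
    (K : ℕ) (hK : 2 ≤ K)
    (f : Θ → X → P) (ℓ : P → Fin K → ℝ) (C : ℝ)
    (hsym : ∀ p : P, ∑ j : Fin K, ℓ p j = C)
    (μ : Measure (X × Fin K)) [IsProbabilityMeasure μ]
    (hmeas : ∀ (θ : Θ) (j : Fin K), Measurable (fun z : X × Fin K => ℓ (f θ z.1) j))
    (hint : ∀ (θ : Θ) (j : Fin K), Integrable (fun z : X × Fin K => ℓ (f θ z.1) j) μ)
    (η : Fin K → Fin K → ℝ)
    (hη01 : ∀ i j : Fin K, i ≠ j → 0 ≤ η i j ∧ η i j ≤ 1)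
    (ηtot : Fin K → ℝ)
    (hηtot : ∀ i : Fin K, ηtot i = ∑ j ∈ Finset.univ.filter (fun j => j ≠ i), η i j)
    (hηtot1 : ∀ i : Fin K, ηtot i ≤ 1)
    (Lcd : Θ → ℝ)
    (hLcd : ∀ θ : Θ, Lcd θ =
      ∫ z : X × Fin K,
        ((1 - ηtot z.2) * ℓ (f θ z.1) z.2
          + ∑ j ∈ Finset.univ.filter (fun j => j ≠ z.2), η z.2 j * ℓ (f θ z.1) j) ∂μ)
    (θ : Θ) :
    Lcd θ = C * (∫ z : X × Fin K, (1 - ηtot z.2) ∂μ)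
      - ∫ z : X × Fin K,
          ∑ j ∈ Finset.univ.filter (fun j => j ≠ z.2),
            (1 - ηtot z.2 - η z.2 j) * ℓ (f θ z.1) j ∂μ := by
  rw [hLcd θ]
  exact class_dependent_noise_risk_decomposition_general measurable_snd.aemeasurable
    (ae_of_all μ fun z => hsym (f θ z.1)) (hint θ) (fun i => 1 - ηtot i) η
end

section
/- A symmetric loss is noise-tolerant under class-dependent label noise: assume in addition that 0 ≤ ℓ(p, j) ≤ C/(K − 1) for all p and j, that η_{ij} < 1 − η_i for all i and all j ≠ i, and that there exists θ* ∈ Θ with L_clean(θ*) = 0. Then any minimizer θ̂ of the noisy risk L_cd over Θ satisfies L_clean(θ̂) = 0; in particular θ̂ also minimizes the clean risk L_clean over Θ. -/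
open MeasureTheory Finset

/-!
Write `M = C / (K - 1)`. The losses sum to `(K - 1) * M`, so `ℓ i` is the total slack
`∑_{j ≠ i} (M - ℓ j)` of the other classes, and the noisy loss at label `i` becomes
`M * ∑_{j ≠ i} η i j + ∑_{j ≠ i} (1 - η_i - η i j) * (M - ℓ j)`.
Its first term does not depend on the prediction. The second is a combination of the slacks with
positive coefficients, so it is nonnegative and vanishes exactly when `ℓ i = 0`. Hence the noisy
risk attains its prediction-free lower bound exactly when the clean risk is zero.
-/

section Pointwise

variable {ι : Type*} [Fintype ι] {κ : ι → ℝ} {η : ι → ι → ℝ} {M : ℝ} {v : ι → ℝ} {i : ι}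

lemma sum_ne_sub_eq_apply [DecidableEq ι] (hsum : ∑ j, v j = (Fintype.card ι - 1) * M) (i : ι) :
    ∑ j with j ≠ i, (M - v j) = v i := by
  have hall : ∑ j, (M - v j) = M := by
    rw [sum_sub_distrib, hsum, sum_const, card_univ, nsmul_eq_mul]
    ring
  have hsplit := add_sum_erase univ (fun j => M - v j) (mem_univ i)
  rw [filter_ne']
  linarith

lemma apply_nonneg_of_sum_eq (hsum : ∑ j, v j = (Fintype.card ι - 1) * M) (hle : ∀ j, v j ≤ M)
    (i : ι) : 0 ≤ v i := by
  classical
  rw [← sum_ne_sub_eq_apply hsum i]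
  exact sum_nonneg fun j _ => sub_nonneg.2 (hle j)

variable [DecidableEq ι]

/-- The expected loss after the true label `i` is corrupted: it is kept with weight `κ i` and
replaced by `j ≠ i` with weight `η i j`. The weights are arbitrary reals; label noise with flip
probabilities `η i j` has `κ i = 1 - ∑_{j ≠ i} η i j`. -/
def noisyLoss (κ : ι → ℝ) (η : ι → ι → ℝ) (v : ι → ℝ) (i : ι) : ℝ :=
  κ i * v i + ∑ j with j ≠ i, η i j * v j

/-- The noisy loss at label `i` of a prediction whose loss is `0` at `i` and `M` at every other
class; it is the prediction-independent part of the noisy loss. -/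
def noiseFloor (η : ι → ι → ℝ) (M : ℝ) (i : ι) : ℝ :=
  ∑ j with j ≠ i, η i j * M

lemma noisyLoss_eq_noiseFloor_add (κ : ι → ℝ) (η : ι → ι → ℝ)
    (hsum : ∑ j, v j = (Fintype.card ι - 1) * M) (i : ι) :
    noisyLoss κ η v i = noiseFloor η M i + ∑ j with j ≠ i, (κ i - η i j) * (M - v j) := by
  rw [noisyLoss, noiseFloor, ← sum_ne_sub_eq_apply hsum i, mul_sum, ← sum_add_distrib,
    ← sum_add_distrib]
  exact sum_congr rfl fun j _ => by ring

lemma noiseFloor_le_noisyLoss (hsum : ∑ j, v j = (Fintype.card ι - 1) * M) (hle : ∀ j, v j ≤ M)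
    (hnoise : ∀ j, j ≠ i → η i j ≤ κ i) : noiseFloor η M i ≤ noisyLoss κ η v i := by
  rw [noisyLoss_eq_noiseFloor_add κ η hsum, le_add_iff_nonneg_right]
  exact sum_nonneg fun j hj =>
    mul_nonneg (sub_nonneg.2 (hnoise j (mem_filter_univ j |>.1 hj))) (sub_nonneg.2 (hle j))

lemma noiseFloor_eq_noisyLoss_iff (hsum : ∑ j, v j = (Fintype.card ι - 1) * M)
    (hle : ∀ j, v j ≤ M) (hnoise : ∀ j, j ≠ i → η i j < κ i) :
    noiseFloor η M i = noisyLoss κ η v i ↔ v i = 0 := by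
  have hgap : ∀ j ∈ univ.filter (· ≠ i), 0 < κ i - η i j := fun j hj =>
    sub_pos.2 (hnoise j (mem_filter_univ j |>.1 hj))
  have hslack : ∀ j, 0 ≤ M - v j := fun j => sub_nonneg.2 (hle j)
  calc noiseFloor η M i = noisyLoss κ η v i
    _ ↔ ∑ j with j ≠ i, (κ i - η i j) * (M - v j) = 0 := by
      rw [noisyLoss_eq_noiseFloor_add κ η hsum, left_eq_add]
    _ ↔ ∀ j ∈ univ.filter (· ≠ i), (κ i - η i j) * (M - v j) = 0 :=
      sum_eq_zero_iff_of_nonneg fun j hj => mul_nonneg (hgap j hj).le (hslack j)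
    _ ↔ ∀ j ∈ univ.filter (· ≠ i), M - v j = 0 :=
      forall₂_congr fun j hj => mul_eq_zero_iff_left (hgap j hj).ne'
    _ ↔ ∑ j with j ≠ i, (M - v j) = 0 :=
      (sum_eq_zero_iff_of_nonneg fun j _ => hslack j).symm
    _ ↔ v i = 0 := by rw [sum_ne_sub_eq_apply hsum]

end Pointwise

section Risk

variable {Ω ι : Type*} [MeasurableSpace Ω] {μ : Measure Ω} {Y : Ω → ι}

/-- The expected loss at the label `Y`, where `v z j` is the loss on the sample `z` if its label
were `j`. Applied to `noisyLoss` of the loss vectors it is the risk under label noise. -/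
noncomputable def labelRisk (μ : Measure Ω) (Y : Ω → ι) (v : Ω → ι → ℝ) : ℝ :=
  ∫ z, v z (Y z) ∂μ

variable [MeasurableSpace ι] [MeasurableSingletonClass ι]

lemma integrable_apply_label [Finite ι] {E : Type*} [NormedAddCommGroup E] {v : Ω → ι → E}
    (hY : Measurable Y) (hv : ∀ j, Integrable (fun z => v z j) μ) :
    Integrable (fun z => v z (Y z)) μ := by
  classical
  have := Fintype.ofFinite ι
  have hsum : Integrable (fun z => ∑ j, (Y ⁻¹' {j}).indicator (fun z => v z j) z) μ :=
    integrable_finsetSum _ fun j _ => (hv j).indicator (hY (measurableSet_singleton j))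
  simpa [Set.indicator_apply] using hsum

variable [Fintype ι] [DecidableEq ι] {κ : ι → ℝ} {η : ι → ι → ℝ} {M : ℝ} {v : Ω → ι → ℝ}

lemma integrable_noisyLoss_label (κ : ι → ℝ) (η : ι → ι → ℝ) (hY : Measurable Y)
    (hv : ∀ j, Integrable (fun z => v z j) μ) :
    Integrable (fun z => noisyLoss κ η (v z) (Y z)) μ :=
  integrable_apply_label hY fun i =>
    ((hv i).const_mul (κ i)).add (integrable_finsetSum _ fun j _ => (hv j).const_mul (η i j))

variable [IsFiniteMeasure μ]

lemma integrable_noiseFloor_label (η : ι → ι → ℝ) (M : ℝ) (hY : Measurable Y) :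
    Integrable (fun z => noiseFloor η M (Y z)) μ :=
  integrable_apply_label hY fun i => integrable_const (noiseFloor η M i)

lemma labelRisk_noiseFloor_le (hY : Measurable Y) (hv : ∀ j, Integrable (fun z => v z j) μ)
    (hsum : ∀ z, ∑ j, v z j = (Fintype.card ι - 1) * M) (hle : ∀ z j, v z j ≤ M)
    (hnoise : ∀ i j, j ≠ i → η i j ≤ κ i) :
    labelRisk μ Y (fun _ => noiseFloor η M) ≤ labelRisk μ Y (fun z => noisyLoss κ η (v z)) :=
  integral_mono (integrable_noiseFloor_label η M hY) (integrable_noisyLoss_label κ η hY hv)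
    fun z => noiseFloor_le_noisyLoss (hsum z) (hle z) (hnoise (Y z))

lemma labelRisk_noiseFloor_eq_iff (hY : Measurable Y) (hv : ∀ j, Integrable (fun z => v z j) μ)
    (hsum : ∀ z, ∑ j, v z j = (Fintype.card ι - 1) * M) (hle : ∀ z j, v z j ≤ M)
    (hnoise : ∀ i j, j ≠ i → η i j < κ i) :
    labelRisk μ Y (fun _ => noiseFloor η M) = labelRisk μ Y (fun z => noisyLoss κ η (v z)) ↔
      labelRisk μ Y v = 0 := by
  have hfloor : ∀ z, noiseFloor η M (Y z) ≤ noisyLoss κ η (v z) (Y z) := fun z =>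
    noiseFloor_le_noisyLoss (hsum z) (hle z) fun j hj => (hnoise (Y z) j hj).le
  calc labelRisk μ Y (fun _ => noiseFloor η M) = labelRisk μ Y (fun z => noisyLoss κ η (v z))
    _ ↔ ∀ᵐ z ∂μ, noiseFloor η M (Y z) = noisyLoss κ η (v z) (Y z) :=
      integral_eq_iff_of_ae_le (integrable_noiseFloor_label η M hY)
        (integrable_noisyLoss_label κ η hY hv) (ae_of_all μ hfloor)
    _ ↔ ∀ᵐ z ∂μ, v z (Y z) = 0 := by
      simp only [noiseFloor_eq_noisyLoss_iff (hsum _) (hle _) (hnoise _)]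
    _ ↔ labelRisk μ Y v = 0 :=
      (integral_eq_zero_iff_of_nonneg (fun z => apply_nonneg_of_sum_eq (hsum z) (hle z) (Y z))
        (integrable_apply_label hY hv)).symm

theorem symmetric_loss_noise_tolerant_class_dependent_general {Θ : Type*}
    {v : Θ → Ω → ι → ℝ} (hY : Measurable Y)
    (hv : ∀ θ j, Integrable (fun z => v θ z j) μ)
    (hsum : ∀ θ z, ∑ j, v θ z j = (Fintype.card ι - 1) * M) (hle : ∀ θ z j, v θ z j ≤ M)
    (hnoise : ∀ i j, j ≠ i → η i j < κ i)
    {θstar θhat : Θ} (hstar : labelRisk μ Y (v θstar) = 0)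
    (hhat : labelRisk μ Y (fun z => noisyLoss κ η (v θhat z)) ≤
      labelRisk μ Y (fun z => noisyLoss κ η (v θstar z))) :
    labelRisk μ Y (v θhat) = 0 ∧ ∀ θ, labelRisk μ Y (v θhat) ≤ labelRisk μ Y (v θ) := by
  have hattained (θ : Θ) :=
    labelRisk_noiseFloor_eq_iff hY (hv θ) (hsum θ) (hle θ) hnoise
  have hfloor := labelRisk_noiseFloor_le hY (hv θhat) (hsum θhat) (hle θhat)
    fun i j hj => (hnoise i j hj).le
  have hzero : labelRisk μ Y (v θhat) = 0 :=
    (hattained θhat).1 (hfloor.antisymm (hhat.trans_eq ((hattained θstar).2 hstar).symm))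
  exact ⟨hzero, fun θ => hzero.trans_le (integral_nonneg fun z =>
    apply_nonneg_of_sum_eq (hsum θ z) (hle θ z) (Y z))⟩

end Risk

/-- A symmetric loss is noise-tolerant under class-dependent label noise: if the loss is
bounded in `[0, C/(K-1)]`, the noise satisfies `η_{ij} < 1 − η_i` for all `j ≠ i`, and some
`θ*` achieves zero clean risk, then any minimizer `θ̂` of the noisy risk has zero clean risk
and hence also minimizes the clean risk. -/
theorem symmetric_loss_noise_tolerant_class_dependent
    {X : Type*} [MeasurableSpace X] {Θ : Type*} {P : Type*}
    (K : ℕ) (hK : 2 ≤ K)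
    (f : Θ → X → P) (ℓ : P → Fin K → ℝ) (C : ℝ)
    (hsym : ∀ p : P, ∑ j : Fin K, ℓ p j = C)
    (hbound : ∀ (p : P) (j : Fin K), 0 ≤ ℓ p j ∧ ℓ p j ≤ C / ((K : ℝ) - 1))
    (μ : Measure (X × Fin K)) [IsProbabilityMeasure μ]
    (hmeas : ∀ (θ : Θ) (j : Fin K), Measurable (fun z : X × Fin K => ℓ (f θ z.1) j))
    (hint : ∀ (θ : Θ) (j : Fin K), Integrable (fun z : X × Fin K => ℓ (f θ z.1) j) μ)
    (η : Fin K → Fin K → ℝ)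
    (hη01 : ∀ i j : Fin K, i ≠ j → 0 ≤ η i j ∧ η i j ≤ 1)
    (ηtot : Fin K → ℝ)
    (hηtot : ∀ i : Fin K, ηtot i = ∑ j ∈ Finset.univ.filter (fun j => j ≠ i), η i j)
    (hηtot1 : ∀ i : Fin K, ηtot i ≤ 1)
    (hnoise : ∀ i j : Fin K, j ≠ i → η i j < 1 - ηtot i)
    (Lclean Lcd : Θ → ℝ)
    (hLclean : ∀ θ : Θ, Lclean θ = ∫ z : X × Fin K, ℓ (f θ z.1) z.2 ∂μ)
    (hLcd : ∀ θ : Θ, Lcd θ =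
      ∫ z : X × Fin K,
        ((1 - ηtot z.2) * ℓ (f θ z.1) z.2
          + ∑ j ∈ Finset.univ.filter (fun j => j ≠ z.2), η z.2 j * ℓ (f θ z.1) j) ∂μ)
    (θstar : Θ) (hstar : Lclean θstar = 0)
    (θhat : Θ) (hhat : ∀ θ : Θ, Lcd θhat ≤ Lcd θ) :
    Lclean θhat = 0 ∧ ∀ θ : Θ, Lclean θhat ≤ Lclean θ := by
  have hC : C = (Fintype.card (Fin K) - 1) * (C / ((K : ℝ) - 1)) := by
    have hK' : (K : ℝ) - 1 ≠ 0 := sub_ne_zero.2 (by exact_mod_cast (by omega : K ≠ 1))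
    rw [Fintype.card_fin, mul_div_cancel₀ C hK']
  obtain rfl : Lclean = _ := funext hLclean
  obtain rfl : Lcd = _ := funext hLcd
  exact symmetric_loss_noise_tolerant_class_dependent_general measurable_snd hint
    (fun θ z => (hsym (f θ z.1)).trans hC) (fun θ z j => (hbound (f θ z.1) j).2) hnoise hstar
    (hhat θstar)
end

section
/- Under non-uniform (sample-dependent) label noise with measurable noise rate function η : X → [0, 1], the noisy risk of a symmetric loss decomposes as: for every parameter θ, L_nu(θ) = (C/(K − 1)) · ∫ η(x) dμ(x, y) + ∫ (1 − K·η(x)/(K − 1)) · ℓ(f θ x, y) dμ(x, y). -/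
open MeasureTheory Finset

theorem one_sub_mul_add_div_mul_sum_ne_eq {𝕜 ι : Type*} [Field 𝕜] [Fintype ι] [DecidableEq ι]
    (hcard : (Fintype.card ι : 𝕜) ≠ 1) (g : ι → 𝕜) (i : ι) (η : 𝕜) :
    (1 - η) * g i + η / ((Fintype.card ι : 𝕜) - 1) * ∑ j with j ≠ i, g j
      = (∑ j, g j) / ((Fintype.card ι : 𝕜) - 1) * η
        + (1 - (Fintype.card ι : 𝕜) * η / ((Fintype.card ι : 𝕜) - 1)) * g i := by
  have hcard_sub : (Fintype.card ι : 𝕜) - 1 ≠ 0 := sub_ne_zero.2 hcard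
  rw [filter_ne', sum_erase_eq_sub (mem_univ i)]
  field_simp
  ring

theorem integrable_apply_of_forall_integrable {Z ι E : Type*} [MeasurableSpace Z] [Finite ι]
    [MeasurableSpace ι] [MeasurableSingletonClass ι] [NormedAddCommGroup E] {μ : Measure Z}
    {y : Z → ι} (hy : AEMeasurable y μ) {g : Z → ι → E} (hg : ∀ j, Integrable (g · j) μ) :
    Integrable (fun z ↦ g z (y z)) μ := by
  classical
  have := Fintype.ofFinite ι
  have sum_indicator : (fun z ↦ g z (y z)) = fun z ↦ ∑ j, (y ⁻¹' {j}).indicator (g · j) z := by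
    ext z
    simp [Set.indicator_apply]
  rw [sum_indicator]
  exact integrable_finsetSum _ fun j _ ↦
    (hg j).indicator₀ (hy.nullMeasurableSet_preimage (measurableSet_singleton j))

/-- Here `y z` is the clean label of the sample `z` and `g z j` the loss of the prediction at `z`
against the label `j`; the noise rate `η` may depend on the label as well as on the input. -/
theorem nonuniform_noise_risk_decomposition_general {Z ι : Type*} [MeasurableSpace Z]
    [Fintype ι] [DecidableEq ι] [Nontrivial ι] [MeasurableSpace ι] [MeasurableSingletonClass ι]
    {μ : Measure Z} {y : Z → ι} (hy : AEMeasurable y μ) {g : Z → ι → ℝ} {C : ℝ}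
    (hsym : ∀ᵐ z ∂μ, ∑ j, g z j = C) (hg : ∀ j, Integrable (g · j) μ)
    {η : Z → ℝ} (hη : Integrable η μ) (hη_top : MemLp η ⊤ μ) :
    ∫ z, ((1 - η z) * g z (y z)
        + η z / ((Fintype.card ι : ℝ) - 1) * ∑ j with j ≠ y z, g z j) ∂μ
      = C / ((Fintype.card ι : ℝ) - 1) * ∫ z, η z ∂μ
        + ∫ z, (1 - (Fintype.card ι : ℝ) * η z / ((Fintype.card ι : ℝ) - 1)) * g z (y z) ∂μ := by
  have hcard : (Fintype.card ι : ℝ) ≠ 1 := mod_cast Fintype.one_lt_card.ne'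
  have weight_memLp :
      MemLp (fun z ↦ 1 - (Fintype.card ι : ℝ) * η z / ((Fintype.card ι : ℝ) - 1)) ⊤ μ := by
    simp only [mul_div_right_comm]
    exact (memLp_top_const (1 : ℝ)).sub
      (hη_top.const_mul (Fintype.card ι / (Fintype.card ι - 1) : ℝ))
  have weighted_integrable : Integrable (fun z ↦
      (1 - (Fintype.card ι : ℝ) * η z / ((Fintype.card ι : ℝ) - 1)) * g z (y z)) μ :=
    (integrable_apply_of_forall_integrable hy hg).mul_of_top_right weight_memLp
  rw [← integral_const_mul, ← integral_add (hη.const_mul _) weighted_integrable]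
  refine integral_congr_ae ?_
  filter_upwards [hsym] with z hz
  rw [one_sub_mul_add_div_mul_sum_ne_eq hcard, hz]

/-- Under non-uniform (sample-dependent) label noise with rate function `η : X → [0,1]`, the
noisy risk of a symmetric loss decomposes as
`L_nu(θ) = (C/(K-1))·∫ η(x) dμ + ∫ (1 − K·η(x)/(K−1))·ℓ(f θ x, y) dμ`. -/
theorem nonuniform_noise_risk_decomposition
    {X : Type*} [MeasurableSpace X] {Θ : Type*} {P : Type*}
    (K : ℕ) (hK : 2 ≤ K)
    (f : Θ → X → P) (ℓ : P → Fin K → ℝ) (C : ℝ)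
    (hsym : ∀ p : P, ∑ j : Fin K, ℓ p j = C)
    (μ : Measure (X × Fin K)) [IsProbabilityMeasure μ]
    (hmeas : ∀ (θ : Θ) (j : Fin K), Measurable (fun z : X × Fin K => ℓ (f θ z.1) j))
    (hint : ∀ (θ : Θ) (j : Fin K), Integrable (fun z : X × Fin K => ℓ (f θ z.1) j) μ)
    (η : X → ℝ) (hηmeas : Measurable η) (hη01 : ∀ x : X, 0 ≤ η x ∧ η x ≤ 1)
    (Lnu : Θ → ℝ)
    (hLnu : ∀ θ : Θ, Lnu θ =
      ∫ z : X × Fin K,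
        ((1 - η z.1) * ℓ (f θ z.1) z.2
          + (η z.1 / ((K : ℝ) - 1)) *
              ∑ j ∈ Finset.univ.filter (fun j => j ≠ z.2), ℓ (f θ z.1) j) ∂μ)
    (θ : Θ) :
    Lnu θ = (C / ((K : ℝ) - 1)) * (∫ z : X × Fin K, η z.1 ∂μ)
      + ∫ z : X × Fin K, (1 - (K : ℝ) * η z.1 / ((K : ℝ) - 1)) * ℓ (f θ z.1) z.2 ∂μ := by
  have : Nontrivial (Fin K) := Fin.nontrivial_iff_two_le.2 hK
  have hη_top : MemLp (fun z : X × Fin K ↦ η z.1) ⊤ μ :=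
    memLp_of_bounded (.of_forall fun z ↦ hη01 z.1)
      (hηmeas.comp measurable_fst).aestronglyMeasurable ⊤
  simpa only [hLnu, Fintype.card_fin] using nonuniform_noise_risk_decomposition_general
    measurable_snd.aemeasurable (.of_forall fun z ↦ hsym (f θ z.1)) (hint θ)
    (hη_top.integrable le_top) hη_top
end
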